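/- For every real number t with 0 < t < 8/7, the inequality ψ'(√(2t^3/((2t+1)·ln(2t+1)))) ≤ (2t+1)·ln(2t+1) / (t·((2t+1)·ln(2t+1) − 2t)) holds, where ψ' is the derivative of the digamma function (the trigamma function). -/

import Mathlib

/-!
The trigamma function is controlled by `ψ'(x) ≤ 1/x² + 1/(x + 1/2)` for `x > 0`
(`deriv_digamma_le`). To see this, put `K x = ψ(x) + 1/x - log (x + 1/2)`. The functional equation
of `ψ` makes `K x - K (x + 1)` an explicit decreasing function of `x`, and `K x → 0` at infinity by
convexity of `log Γ`; telescoping shows that `K` is antitone, so its derivative is nonpositive.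

With `p = (2t+1) log(2t+1) / (2t)` the argument of `ψ'` is `t / √p`, and the right-hand side is
`p / (t (p - 1))`. As `1/√p ≥ 2/(1+p)`, it is enough to prove a rational inequality in `t` and `p`
that gets stronger as `p` grows. The Padé bound `log_one_add_le` bounds `p` from above, and what
remains is a polynomial inequality in `t` on `(0, 8/7)`.
-/

open Real

/-- The digamma function `ψ = Γ′/Γ`. -/
noncomputable def digamma (x : ℝ) : ℝ := deriv Real.Gamma x / Real.Gamma x

open Set Filter Topology

lemma differentiableAt_Gamma_of_pos {x : ℝ} (hx : 0 < x) : DifferentiableAt ℝ Real.Gamma x :=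
  Real.differentiableAt_Gamma fun m => by
    have : (0 : ℝ) ≤ m := m.cast_nonneg
    linarith

lemma hasDerivAt_log_Gamma {x : ℝ} (hx : 0 < x) :
    HasDerivAt (Real.log ∘ Real.Gamma) (digamma x) x := by
  have h := (differentiableAt_Gamma_of_pos hx).hasDerivAt.log (Real.Gamma_pos_of_pos hx).ne'
  exact h

lemma log_Gamma_add_one {x : ℝ} (hx : 0 < x) :
    Real.log (Real.Gamma (x + 1)) = Real.log x + Real.log (Real.Gamma x) := by
  rw [Real.Gamma_add_one hx.ne', Real.log_mul hx.ne' (Real.Gamma_pos_of_pos hx).ne']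

lemma digamma_add_one {x : ℝ} (hx : 0 < x) : digamma (x + 1) = digamma x + 1 / x := by
  have h1 : HasDerivAt (fun y => (Real.log ∘ Real.Gamma) (y + 1)) (digamma (x + 1)) x :=
    (hasDerivAt_log_Gamma (by linarith : 0 < x + 1)).comp_add_const x 1
  have h2 : HasDerivAt (fun y => Real.log y + (Real.log ∘ Real.Gamma) y) (x⁻¹ + digamma x) x :=
    (Real.hasDerivAt_log hx.ne').add (hasDerivAt_log_Gamma hx)
  have h3 : (fun y => (Real.log ∘ Real.Gamma) (y + 1)) =ᶠ[𝓝 x]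
      fun y => Real.log y + (Real.log ∘ Real.Gamma) y := by
    filter_upwards [Ioi_mem_nhds hx] with y hy
    exact log_Gamma_add_one hy
  rw [h1.unique (h2.congr_of_eventuallyEq h3), one_div, add_comm]

lemma log_le_digamma_add_one {x : ℝ} (hx : 0 < x) : Real.log x ≤ digamma (x + 1) := by
  have hx1 : 0 < x + 1 := by linarith
  have h := Real.convexOn_log_Gamma.slope_le_of_hasDerivAt (mem_Ioi.2 hx) (mem_Ioi.2 hx1)
    (by linarith) (hasDerivAt_log_Gamma hx1)
  simpa [slope_def_field, log_Gamma_add_one hx] using h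

lemma digamma_le_log {x : ℝ} (hx : 0 < x) : digamma x ≤ Real.log x := by
  have hx1 : 0 < x + 1 := by linarith
  have h := Real.convexOn_log_Gamma.le_slope_of_hasDerivAt (mem_Ioi.2 hx) (mem_Ioi.2 hx1)
    (by linarith) (hasDerivAt_log_Gamma hx)
  simpa [slope_def_field, log_Gamma_add_one hx] using h

/-- The digamma function compared with its midpoint approximation: by the functional equation
this is `ψ(x + 1) - log (x + 1/2)`, which tends to `0` at infinity. -/
noncomputable def digammaGap (x : ℝ) : ℝ := digamma x + 1 / x - Real.log (x + 1 / 2)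

lemma abs_digammaGap_le {x : ℝ} (hx : 0 < x) : |digammaGap x| ≤ 1 / (2 * x) := by
  have e : digammaGap x = digamma (x + 1) - Real.log (x + 1 / 2) := by
    rw [digammaGap, digamma_add_one hx]
  have h1 := log_le_digamma_add_one hx
  have h2 := digamma_le_log (by linarith : 0 < x + 1)
  have h3 : Real.log (x + 1 / 2) - Real.log x ≤ 1 / (2 * x) := by
    rw [← Real.log_div (by positivity) hx.ne']
    refine (Real.log_le_sub_one_of_pos (by positivity)).trans (le_of_eq ?_)
    field_simp
    ring
  have h4 : Real.log (x + 1) - Real.log (x + 1 / 2) ≤ 1 / (2 * x) := by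
    rw [← Real.log_div (by positivity) (by positivity)]
    refine (Real.log_le_sub_one_of_pos (by positivity)).trans ?_
    rw [div_sub_one (by positivity), div_le_div_iff₀ (by positivity) (by positivity)]
    nlinarith
  rw [abs_le, e]
  constructor <;> linarith

/-- The one-step decrement of `digammaGap` is decreasing, because its derivative is
`1/(x+1)² - 1/((x+1)² - 1/4)`. -/
lemma antitoneOn_digammaGap_step :
    AntitoneOn (fun x : ℝ => Real.log (x + 3 / 2) - Real.log (x + 1 / 2) - 1 / (x + 1))
      (Ioi 0) := by
  have hd : ∀ x ∈ Ioi (0 : ℝ),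
      HasDerivAt (fun x : ℝ => Real.log (x + 3 / 2) - Real.log (x + 1 / 2) - 1 / (x + 1))
        (1 / (x + 3 / 2) - 1 / (x + 1 / 2) - (-1 / (x + 1) ^ 2)) x := by
    intro x hx
    have hx : 0 < x := hx
    have a := ((hasDerivAt_id x).add_const (3 / 2 : ℝ)).log (by simp only [id]; positivity)
    have b := ((hasDerivAt_id x).add_const (1 / 2 : ℝ)).log (by simp only [id]; positivity)
    have c := ((hasDerivAt_id x).add_const (1 : ℝ)).inv (by simp only [id]; positivity)
    refine ((a.sub b).sub c).congr_of_eventuallyEq (Eventually.of_forall fun y => ?_)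
    simp
  refine antitoneOn_of_deriv_nonpos (convex_Ioi 0)
    (fun x hx => (hd x hx).continuousAt.continuousWithinAt)
    (fun x hx => (hd x (interior_subset hx)).differentiableAt.differentiableWithinAt) ?_
  intro x hx
  have hx' := interior_subset hx
  rw [(hd x hx').deriv]
  have hx0 : 0 < x := hx'
  have e : 1 / (x + 3 / 2) - 1 / (x + 1 / 2) - (-1 / (x + 1) ^ 2)
      = -(1 / (4 * (x + 3 / 2) * (x + 1 / 2) * (x + 1) ^ 2)) := by
    field_simp
    ring
  rw [e, neg_nonpos]
  positivity

lemma digammaGap_sub {x : ℝ} (hx : 0 < x) : digammaGap x - digammaGap (x + 1) =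
    Real.log (x + 3 / 2) - Real.log (x + 1 / 2) - 1 / (x + 1) := by
  rw [digammaGap, digammaGap, digamma_add_one hx, show x + 1 + 1 / 2 = x + 3 / 2 by ring]
  ring

lemma antitoneOn_digammaGap : AntitoneOn digammaGap (Ioi 0) := by
  intro x hx y hy hxy
  have hx : 0 < x := hx
  have hy : 0 < y := hy
  have step : ∀ n : ℕ, digammaGap (x + n) - digammaGap (y + n) ≤ digammaGap x - digammaGap y := by
    intro n
    induction n with
    | zero => simp
    | succ n ih =>
      have hxn : 0 < x + n := by positivity
      have hyn : 0 < y + n := by positivity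
      have h := antitoneOn_digammaGap_step (mem_Ioi.2 hxn) (mem_Ioi.2 hyn) (by linarith)
      simp only [← digammaGap_sub hxn, ← digammaGap_sub hyn] at h
      push_cast
      rw [← add_assoc, ← add_assoc]
      linarith
  have lim : ∀ {z : ℝ}, 0 < z → Tendsto (fun n : ℕ => digammaGap (z + n)) atTop (𝓝 0) := by
    intro z hz
    have h1 : Tendsto (fun n : ℕ => 2 * (z + n)) atTop atTop :=
      (tendsto_atTop_add_const_left _ z tendsto_natCast_atTop_atTop).const_mul_atTop two_pos
    refine squeeze_zero_norm (fun n => ?_) h1.inv_tendsto_atTop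
    rw [Real.norm_eq_abs]
    refine (abs_digammaGap_le (by positivity)).trans (le_of_eq ?_)
    simp
  have h := le_of_tendsto ((lim hx).sub (lim hy)) (Eventually.of_forall step)
  linarith

/-- If `ψ` were not differentiable at `x`, its `deriv` would be `0` and the bound trivial, so
second-order smoothness of `Γ` is not needed. -/
lemma deriv_digamma_le {x : ℝ} (hx : 0 < x) :
    deriv digamma x ≤ 1 / x ^ 2 + 1 / (x + 1 / 2) := by
  by_cases hd : DifferentiableAt ℝ digamma x
  · have b := ((hasDerivAt_id x).add_const (1 / 2 : ℝ)).log (by simp only [id]; positivity)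
    have h : HasDerivAt digammaGap (deriv digamma x + -(x ^ 2)⁻¹ - 1 / (x + 1 / 2)) x := by
      have := (hd.hasDerivAt.add (hasDerivAt_inv hx.ne')).sub b
      refine this.congr_of_eventuallyEq (Eventually.of_forall fun y => ?_)
      simp [digammaGap]
    have h2 := antitoneOn_digammaGap.derivWithin_nonpos (x := x)
    rw [derivWithin_of_mem_nhds (Ioi_mem_nhds hx), h.deriv] at h2
    rw [one_div (x ^ 2)]
    linarith
  · rw [deriv_zero_of_not_differentiableAt hd]
    positivity

/-- The `[3/2]` Padé approximant at `0` is an upper bound for `log (1 + u)`. -/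
lemma log_one_add_le {u : ℝ} (hu : 0 ≤ u) :
    Real.log (u + 1) ≤ u * (u ^ 2 + 21 * u + 30) / (3 * (3 * u ^ 2 + 12 * u + 10)) := by
  let f : ℝ → ℝ := fun u =>
    u * (u ^ 2 + 21 * u + 30) / (3 * (3 * u ^ 2 + 12 * u + 10)) - Real.log (u + 1)
  have hd : ∀ x ∈ Ici (0 : ℝ), HasDerivAt f
      (x ^ 5 / ((3 * x ^ 2 + 12 * x + 10) ^ 2 * (x + 1))) x := by
    intro x hx
    have hx : 0 ≤ x := hx
    have i := hasDerivAt_id x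
    have a := i.mul ((((i.pow 2)).add (i.const_mul 21)).add_const 30)
    have b := (((((i.pow 2).const_mul 3)).add (i.const_mul 12)).add_const 10).const_mul 3
    have c := (i.add_const (1 : ℝ)).log (by simp only [id]; positivity)
    have q := (a.div b (by simp; positivity)).sub c
    refine (q.congr_deriv ?_).congr_of_eventuallyEq (Eventually.of_forall fun y => ?_)
    · simp
      field_simp
      ring
    · simp [f]
  have mono : MonotoneOn f (Ici 0) := by
    refine monotoneOn_of_deriv_nonneg (convex_Ici 0)
      (fun x hx => (hd x hx).continuousAt.continuousWithinAt)
      (fun x hx => (hd x (interior_subset hx)).differentiableAt.differentiableWithinAt) ?_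
    intro x hx
    have hx' := interior_subset hx
    rw [(hd x hx').deriv]
    have hx0 : 0 ≤ x := hx'
    positivity
  have h := mono self_mem_Ici (mem_Ici.2 hu) hu
  simp only [f] at h
  norm_num at h
  linarith

/-- The polynomial is the value of the cubic in `cubic_nonneg` at the largest `q` allowed there,
with denominators cleared and a factor `t²` removed. -/
lemma endpoint_poly_nonneg {t : ℝ} (ht : 0 < t) (ht' : t < 8 / 7) :
    0 ≤ 4500 + 30150 * t + 76410 * t ^ 2 + 83358 * t ^ 3 + 16432 * t ^ 4 - 44160 * t ^ 5
      - 37152 * t ^ 6 - 9568 * t ^ 7 - 576 * t ^ 8 := by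
  have b2 : t ^ 2 ≤ (8 / 7) ^ 2 := by gcongr
  have b3 : t ^ 3 ≤ (8 / 7) ^ 3 := by gcongr
  have b4 : t ^ 4 ≤ (8 / 7) ^ 4 := by gcongr
  have b5 : t ^ 5 ≤ (8 / 7) ^ 5 := by gcongr
  have h : -48000 ≤ 83358 - 44160 * t ^ 2 - 37152 * t ^ 3 - 9568 * t ^ 4 - 576 * t ^ 5 := by
    linarith
  have h3 := mul_le_mul_of_nonneg_left h (pow_pos ht 3).le
  have h2 := mul_le_mul_of_nonneg_left ht'.le (pow_pos ht 2).le
  have := pow_pos ht 2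
  have := pow_pos ht 4
  nlinarith

/-- The cubic in `q` is concave for `q ≥ 0` and nonnegative at both ends of the range. The upper end
is what the Padé bound `log_one_add_le` gives for `q = (2t+1) log(2t+1) / (2t) - 1`. -/
lemma cubic_nonneg {t q : ℝ} (ht : 0 < t) (ht' : t < 8 / 7) (hq : 0 < q)
    (hqt : q ≤ t * (4 * t ^ 2 + 26 * t + 15) / (18 * t ^ 2 + 36 * t + 15)) :
    0 ≤ (1 + q) * (4 * t + 2 + q) * (t - q) - 2 * t ^ 2 * q * (2 + q) := by
  set r := t * (4 * t ^ 2 + 26 * t + 15) / (18 * t ^ 2 + 36 * t + 15) with hr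
  have hr0 : 0 < r := by positivity
  have hend : 0 ≤ (1 + r) * (4 * t + 2 + r) * (t - r) - 2 * t ^ 2 * r * (2 + r) := by
    have e : (1 + r) * (4 * t + 2 + r) * (t - r) - 2 * t ^ 2 * r * (2 + r) =
        t ^ 2 * (4500 + 30150 * t + 76410 * t ^ 2 + 83358 * t ^ 3 + 16432 * t ^ 4
          - 44160 * t ^ 5 - 37152 * t ^ 6 - 9568 * t ^ 7 - 576 * t ^ 8)
          / (18 * t ^ 2 + 36 * t + 15) ^ 3 := by
      rw [hr]
      field_simp
      ring
    rw [e]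
    have := endpoint_poly_nonneg ht ht'
    positivity
  -- The chord inequality for the concave cubic, with its defect written out.
  have e : r * ((1 + q) * (4 * t + 2 + q) * (t - q) - 2 * t ^ 2 * q * (2 + q)) =
      (r - q) * (t * (4 * t + 2))
        + q * ((1 + r) * (4 * t + 2 + r) * (t - r) - 2 * t ^ 2 * r * (2 + r))
        + q * r * (r - q) * (3 * t + 3 + 2 * t ^ 2 + r + q) := by
    ring
  have hrq : 0 ≤ r - q := by linarith
  have : 0 ≤ r * ((1 + q) * (4 * t + 2 + q) * (t - q) - 2 * t ^ 2 * q * (2 + q)) := by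
    rw [e]
    positivity
  exact nonneg_of_mul_nonneg_right this hr0

theorem stmt_15 (t : ℝ) (ht : 0 < t) (ht' : t < 8/7) :
    deriv digamma (Real.sqrt (2 * t ^ 3 / ((2 * t + 1) * Real.log (2 * t + 1)))) ≤
      (2 * t + 1) * Real.log (2 * t + 1) /
        (t * ((2 * t + 1) * Real.log (2 * t + 1) - 2 * t)) := by
  have hlog : Real.log (2 * t + 1) ≤
      2 * t * ((2 * t) ^ 2 + 21 * (2 * t) + 30) / (3 * (3 * (2 * t) ^ 2 + 12 * (2 * t) + 10)) :=
    log_one_add_le (by positivity)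
  have hlow : 2 * t < (2 * t + 1) * Real.log (2 * t + 1) := by
    have h := Real.log_lt_sub_one_of_pos (x := (2 * t + 1)⁻¹) (by positivity)
      (by rw [Ne, inv_eq_one]; linarith)
    rw [Real.log_inv] at h
    have h1 : (2 * t + 1) * (2 * t + 1)⁻¹ = 1 := mul_inv_cancel₀ (by positivity)
    nlinarith
  obtain ⟨q, hq⟩ : ∃ q, (2 * t + 1) * Real.log (2 * t + 1) = 2 * t * (1 + q) :=
    ⟨(2 * t + 1) * Real.log (2 * t + 1) / (2 * t) - 1, by field_simp; ring⟩
  have hq0 : 0 < q := by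
    rw [hq] at hlow
    by_contra hneg
    nlinarith
  have hqt : q ≤ t * (4 * t ^ 2 + 26 * t + 15) / (18 * t ^ 2 + 36 * t + 15) := by
    have h1 := mul_le_mul_of_nonneg_left hlog (by positivity : 0 ≤ 2 * t + 1)
    have h2 : (2 * t + 1) * (2 * t * ((2 * t) ^ 2 + 21 * (2 * t) + 30)
        / (3 * (3 * (2 * t) ^ 2 + 12 * (2 * t) + 10))) =
        2 * t * (1 + t * (4 * t ^ 2 + 26 * t + 15) / (18 * t ^ 2 + 36 * t + 15)) := by
      field_simp
      ring
    rw [hq, h2] at h1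
    have := le_of_mul_le_mul_left h1 (by positivity : 0 < 2 * t)
    linarith
  have hcub := cubic_nonneg ht ht' hq0 hqt
  rw [hq]
  have harg : 2 * t ^ 3 / (2 * t * (1 + q)) = t ^ 2 / (1 + q) := by
    field_simp
  rw [harg]
  have hpos : 0 < t ^ 2 / (1 + q) := by positivity
  set y := Real.sqrt (t ^ 2 / (1 + q)) with hy
  have hy0 : 0 < y := Real.sqrt_pos.2 hpos
  have hysq : y ^ 2 = t ^ 2 / (1 + q) := Real.sq_sqrt hpos.le
  -- This is `√(1 + q) ≤ (2 + q) / 2`.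
  have hylow : 2 * t / (2 + q) ≤ y := by
    refine Real.le_sqrt_of_sq_le ?_
    rw [div_pow, div_le_div_iff₀ (by positivity) (by positivity)]
    nlinarith [mul_nonneg (sq_nonneg t) (sq_nonneg q)]
  refine (deriv_digamma_le hy0).trans ?_
  have h1 : 1 / (y + 1 / 2) ≤ 1 / (2 * t / (2 + q) + 1 / 2) := by gcongr
  have h2 : 1 / (2 * t / (2 + q) + 1 / 2) = 2 * (2 + q) / (4 * t + 2 + q) := by
    field_simp
    ring
  rw [hysq]
  have h3 : 2 * t * (1 + q) / (t * (2 * t * (1 + q) - 2 * t))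
      - (1 / (t ^ 2 / (1 + q)) + 2 * (2 + q) / (4 * t + 2 + q)) =
      ((1 + q) * (4 * t + 2 + q) * (t - q) - 2 * t ^ 2 * q * (2 + q))
        / (t ^ 2 * q * (4 * t + 2 + q)) := by
    rw [show 2 * t * (1 + q) - 2 * t = 2 * t * q by ring]
    field_simp
    ring
  have h4 : 0 ≤ ((1 + q) * (4 * t + 2 + q) * (t - q) - 2 * t ^ 2 * q * (2 + q))
        / (t ^ 2 * q * (4 * t + 2 + q)) := by positivity
  linarith
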